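/- Let n ≥ 2 be an integer, let H ≥ 0 be a real number, and let μ_1, …, μ_n be real numbers with ∑_i μ_i = 0. Set Φ = ∑_i μ_i² and β(n,H) = n + n³H²/(2(n−1)) + (n(n−2)/(2(n−1)))√(n²H⁴ + 4(n−1)H²). If Φ ≥ β(n,H) − nH², then Φ² − nΦ − nH²Φ − nH ∑_i μ_i³ ≥ 0. -/

import Mathlib

/-!
Normalise `Φ = n (n - 1) t²` with `t ≥ 0`. Then `|μ i| ≤ (n - 1) t`, so summing
`(μ i - (n - 1) t) (μ i + t)² ≤ 0` gives Okumura's inequality `|∑ μ i³| ≤ (n - 2) t Φ`. Hence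
`Φ² - n Φ - n H² Φ - n H ∑ μ i³ ≥ n Φ ((n - 1) t² - (n - 2) |H| t - (1 + H²))`, and the pinching
condition says exactly that `t` is at least the larger root of the quadratic on the right.
-/

open scoped Finset

section Okumura

variable {ι R : Type*} [CommRing R] [LinearOrder R] [IsStrictOrderedRing R]
  {s : Finset ι} {x : ι → R} {t : R}

lemma card_mul_sq_le_of_sum_eq_zero (hx : ∑ i ∈ s, x i = 0) {i : ι} (hi : i ∈ s) :
    #s * x i ^ 2 ≤ (#s - 1) * ∑ j ∈ s, x j ^ 2 := by
  classical
  have sum_others : ∑ j ∈ s.erase i, x j = -x i := by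
    linear_combination Finset.add_sum_erase s x hi + hx
  have sum_sq_split := Finset.add_sum_erase s (fun j ↦ x j ^ 2) hi
  have card_others : (#(s.erase i) : R) = #s - 1 := Finset.cast_card_erase_of_mem hi
  have cauchy_schwarz : (-x i) ^ 2 ≤ (#s - 1) * ∑ j ∈ s.erase i, x j ^ 2 := by
    rw [← sum_others, ← card_others]
    exact sq_sum_le_card_mul_sum_sq
  rw [← sum_sq_split]
  linear_combination cauchy_schwarz

lemma abs_le_of_sum_eq_zero_of_sum_sq_eq (hx : ∑ i ∈ s, x i = 0) (ht : 0 ≤ t)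
    (hsq : ∑ i ∈ s, x i ^ 2 = #s * (#s - 1) * t ^ 2) {i : ι} (hi : i ∈ s) :
    |x i| ≤ (#s - 1) * t := by
  have card_pos : 0 < #s := Finset.card_pos.mpr ⟨i, hi⟩
  have one_le_card : (1 : R) ≤ #s := mod_cast card_pos
  have sq_le : x i ^ 2 ≤ ((#s - 1) * t) ^ 2 := by
    refine le_of_mul_le_mul_left ?_ (show (0 : R) < #s from mod_cast card_pos)
    calc #s * x i ^ 2 ≤ (#s - 1) * ∑ j ∈ s, x j ^ 2 := card_mul_sq_le_of_sum_eq_zero hx hi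
      _ = #s * ((#s - 1) * t) ^ 2 := by rw [hsq]; ring
  exact abs_le_of_sq_le_sq sq_le (mul_nonneg (sub_nonneg.mpr one_le_card) ht)

lemma sum_pow_three_le_of_sum_eq_zero (hx : ∑ i ∈ s, x i = 0) (ht : 0 ≤ t)
    (hsq : ∑ i ∈ s, x i ^ 2 = #s * (#s - 1) * t ^ 2) :
    ∑ i ∈ s, x i ^ 3 ≤ (#s - 2) * t * ∑ i ∈ s, x i ^ 2 := by
  set a : R := (#s - 1) * t with ha
  have sum_nonpos : ∑ i ∈ s, (x i - a) * (x i + t) ^ 2 ≤ 0 :=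
    Finset.sum_nonpos fun i hi ↦ mul_nonpos_of_nonpos_of_nonneg
      (sub_nonpos.mpr (le_of_abs_le (abs_le_of_sum_eq_zero_of_sum_sq_eq hx ht hsq hi)))
      (sq_nonneg _)
  have expand : ∑ i ∈ s, (x i - a) * (x i + t) ^ 2 =
      ∑ i ∈ s, x i ^ 3 + (2 * t - a) * ∑ i ∈ s, x i ^ 2 + (t ^ 2 - 2 * a * t) * ∑ i ∈ s, x i
        - #s * (a * t ^ 2) := by
    rw [Finset.mul_sum, Finset.mul_sum, ← nsmul_eq_mul, ← Finset.sum_const,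
      ← Finset.sum_add_distrib, ← Finset.sum_add_distrib, ← Finset.sum_sub_distrib]
    exact Finset.sum_congr rfl fun i _ ↦ by ring
  rw [expand, hx, ha] at sum_nonpos
  linear_combination sum_nonpos - t * hsq

lemma abs_sum_pow_three_le_of_sum_eq_zero (hx : ∑ i ∈ s, x i = 0) (ht : 0 ≤ t)
    (hsq : ∑ i ∈ s, x i ^ 2 = #s * (#s - 1) * t ^ 2) :
    |∑ i ∈ s, x i ^ 3| ≤ (#s - 2) * t * ∑ i ∈ s, x i ^ 2 := by
  have neg_sum_le : -∑ i ∈ s, x i ^ 3 ≤ (#s - 2) * t * ∑ i ∈ s, x i ^ 2 := by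
    simpa only [Pi.neg_apply, (show Odd 3 by decide).neg_pow, even_two.neg_pow,
      Finset.sum_neg_distrib] using
      sum_pow_three_le_of_sum_eq_zero (s := s) (x := -x) (t := t)
        (by simp only [Pi.neg_apply, Finset.sum_neg_distrib, hx, neg_zero]) ht
        (by simpa only [Pi.neg_apply, even_two.neg_pow] using hsq)
  exact abs_le'.mpr ⟨sum_pow_three_le_of_sum_eq_zero hx ht hsq, neg_sum_le⟩

end Okumura

lemma quadratic_nonneg_of_root_le {a b c t : ℝ} (ha : 0 < a)
    (ht : (-b + √(discrim a b c)) / (2 * a) ≤ t) : 0 ≤ a * t ^ 2 + b * t + c := by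
  rw [div_le_iff₀ (by positivity)] at ht
  have discrim_le : discrim a b c ≤ (2 * a * t + b) ^ 2 :=
    (Real.sqrt_le_iff.mp (show √(discrim a b c) ≤ 2 * a * t + b by linarith)).2
  have completed_square :
      4 * a * (a * t ^ 2 + b * t + c) = (2 * a * t + b) ^ 2 - discrim a b c := by
    rw [discrim]; ring
  refine nonneg_of_mul_nonneg_right ?_ (show 0 < 4 * a by positivity)
  rw [completed_square]
  exact sub_nonneg.mpr discrim_le

/-- The constant `β₀(n, H) = β(n, H) - n H²` that bounds `Φ` from below in the pinching
condition. The dimension `n` is a real variable. -/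
noncomputable def pinchingConstant (n H : ℝ) : ℝ :=
  n + n ^ 3 * H ^ 2 / (2 * (n - 1)) +
    n * (n - 2) / (2 * (n - 1)) * √(n ^ 2 * H ^ 4 + 4 * (n - 1) * H ^ 2) - n * H ^ 2

/-- For `1 < n`, the larger root of `(n - 1) t² - (n - 2) |H| t - (1 + H²)`, which is the value
of `t` at which `Φ = n (n - 1) t²` meets the pinching constant. -/
noncomputable def pinchingRoot (n H : ℝ) : ℝ :=
  ((n - 2) * |H| + √(n ^ 2 * H ^ 2 + 4 * (n - 1))) / (2 * (n - 1))

section Pinching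

variable {n H t : ℝ}

lemma pinchingConstant_eq_mul_pinchingRoot_sq (hn : 1 < n) :
    pinchingConstant n H = n * (n - 1) * pinchingRoot n H ^ 2 := by
  have sub_one_pos : 0 < n - 1 := sub_pos.mpr hn
  have sqrt_eq : √(n ^ 2 * H ^ 4 + 4 * (n - 1) * H ^ 2) =
      |H| * √(n ^ 2 * H ^ 2 + 4 * (n - 1)) := by
    rw [← Real.sqrt_sq_eq_abs, ← Real.sqrt_mul (sq_nonneg H)]
    ring_nf
  have sq_sqrt : √(n ^ 2 * H ^ 2 + 4 * (n - 1)) ^ 2 = n ^ 2 * H ^ 2 + 4 * (n - 1) :=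
    Real.sq_sqrt (by positivity)
  rw [pinchingConstant, pinchingRoot, sqrt_eq, div_pow, add_sq, mul_pow, sq_abs, sq_sqrt]
  field_simp
  ring

lemma pinchingRoot_le_of_pinchingConstant_le (hn : 1 < n) (ht : 0 ≤ t)
    (h : pinchingConstant n H ≤ n * (n - 1) * t ^ 2) : pinchingRoot n H ≤ t := by
  rw [pinchingConstant_eq_mul_pinchingRoot_sq hn] at h
  have scale_pos : 0 < n * (n - 1) := mul_pos (by linarith) (sub_pos.mpr hn)
  exact le_of_abs_le (abs_le_of_sq_le_sq (le_of_mul_le_mul_left h scale_pos) ht)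

lemma quadratic_nonneg_of_pinchingRoot_le (hn : 1 < n) (h : pinchingRoot n H ≤ t) :
    0 ≤ (n - 1) * t ^ 2 - (n - 2) * |H| * t - (1 + H ^ 2) := by
  have discrim_eq : discrim (n - 1) (-((n - 2) * |H|)) (-(1 + H ^ 2)) =
      n ^ 2 * H ^ 2 + 4 * (n - 1) := by
    rw [discrim, neg_sq, mul_pow, sq_abs]; ring
  have root_le : (-(-((n - 2) * |H|)) + √(discrim (n - 1) (-((n - 2) * |H|)) (-(1 + H ^ 2)))) /
      (2 * (n - 1)) ≤ t := by
    rwa [discrim_eq, neg_neg]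
  linear_combination quadratic_nonneg_of_root_le (sub_pos.mpr hn) root_le

end Pinching

theorem F_nonneg_general {ι : Type*} (s : Finset ι) (hs : 2 ≤ #s) (H : ℝ) (μ : ι → ℝ)
    (hμ : ∑ i ∈ s, μ i = 0) (Φ : ℝ) (hΦ : Φ = ∑ i ∈ s, μ i ^ 2)
    (hpinch : pinchingConstant #s H ≤ Φ) :
    0 ≤ Φ ^ 2 - #s * Φ - #s * H ^ 2 * Φ - #s * H * ∑ i ∈ s, μ i ^ 3 := by
  have one_lt_card : (1 : ℝ) < #s := mod_cast hs
  have scale_pos : (0 : ℝ) < #s * (#s - 1) := mul_pos (by linarith) (sub_pos.mpr one_lt_card)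
  have Φ_nonneg : 0 ≤ Φ := hΦ ▸ Finset.sum_nonneg fun i _ ↦ sq_nonneg (μ i)
  obtain ⟨t, ht, hΦt⟩ : ∃ t : ℝ, 0 ≤ t ∧ Φ = #s * (#s - 1) * t ^ 2 := by
    refine ⟨√(Φ / (#s * (#s - 1))), Real.sqrt_nonneg _, ?_⟩
    rw [Real.sq_sqrt (div_nonneg Φ_nonneg scale_pos.le), mul_div_cancel₀ _ scale_pos.ne']
  have quadratic_nonneg : 0 ≤ (#s - 1) * t ^ 2 - (#s - 2) * |H| * t - (1 + H ^ 2) :=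
    quadratic_nonneg_of_pinchingRoot_le one_lt_card
      (pinchingRoot_le_of_pinchingConstant_le one_lt_card ht (hpinch.trans_eq hΦt))
  have okumura : |∑ i ∈ s, μ i ^ 3| ≤ (#s - 2) * t * Φ :=
    hΦ ▸ abs_sum_pow_three_le_of_sum_eq_zero hμ ht (hΦ ▸ hΦt)
  have cubic_le : H * ∑ i ∈ s, μ i ^ 3 ≤ |H| * ((#s - 2) * t * Φ) :=
    calc H * ∑ i ∈ s, μ i ^ 3 ≤ |H| * |∑ i ∈ s, μ i ^ 3| := abs_mul H _ ▸ le_abs_self _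
      _ ≤ |H| * ((#s - 2) * t * Φ) := by gcongr
  calc 0 ≤ #s * Φ * ((#s - 1) * t ^ 2 - (#s - 2) * |H| * t - (1 + H ^ 2)) := by positivity
    _ = Φ ^ 2 - #s * Φ - #s * H ^ 2 * Φ - #s * (|H| * ((#s - 2) * t * Φ)) := by
      linear_combination -Φ * hΦt
    _ ≤ Φ ^ 2 - #s * Φ - #s * H ^ 2 * Φ - #s * (H * ∑ i ∈ s, μ i ^ 3) := by gcongr
    _ = Φ ^ 2 - #s * Φ - #s * H ^ 2 * Φ - #s * H * ∑ i ∈ s, μ i ^ 3 := by rw [mul_assoc (#s : ℝ) H]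

theorem F_nonneg (n : ℕ) (hn : 2 ≤ n) (H : ℝ) (hH : 0 ≤ H) (μ : Fin n → ℝ)
    (hμ : ∑ i, μ i = 0) (Φ : ℝ) (hΦ : Φ = ∑ i, (μ i) ^ 2)
    (hpinch : Φ ≥ (n : ℝ) + (n : ℝ) ^ 3 * H ^ 2 / (2 * (n - 1)) +
      (n : ℝ) * (n - 2) / (2 * (n - 1)) *
        Real.sqrt ((n : ℝ) ^ 2 * H ^ 4 + 4 * (n - 1) * H ^ 2) - n * H ^ 2) :
    Φ ^ 2 - n * Φ - n * H ^ 2 * Φ - n * H * ∑ i, (μ i) ^ 3 ≥ 0 := by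
  simpa only [Finset.card_fin] using F_nonneg_general Finset.univ (by rwa [Finset.card_fin]) H μ
    hμ Φ hΦ (by rwa [Finset.card_fin])
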